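/- arXiv:2207.14518 — 2 statements merged into one kernel-verified Lean document; each statement's English description precedes it below -/
import Mathlib

section
/- Let V be a finite-dimensional ℚ-vector space with a nondegenerate symmetric bilinear form B, let M be a maximal even lattice in V, and let c ∈ M be a primitive vector with B(c,c) = 0. Then there exists b ∈ M with B(b,b) = 0 and B(c,b) = 1 such that M is the internal orthogonal direct sum of U = ℤc + ℤb and K = {v ∈ M : B(v,c) = 0 and B(v,b) = 0}; in particular M splits off a hyperbolic plane containing c. -/
/-- An even lattice in a `ℚ`-vector space `V` (with respect to a bilinear form `B`):
a finitely generated `ℤ`-submodule that spans `V` over `ℚ`, on which `B` takes integer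
values and takes even values on the diagonal. -/
def IsEvenLattice {V : Type*} [AddCommGroup V] [Module ℚ V]
    (B : V →ₗ[ℚ] V →ₗ[ℚ] ℚ) (M : Submodule ℤ V) : Prop :=
  M.FG ∧ Submodule.span ℚ (M : Set V) = ⊤ ∧
    (∀ v ∈ M, ∀ w ∈ M, ∃ n : ℤ, B v w = (n : ℚ)) ∧
    (∀ v ∈ M, ∃ n : ℤ, B v v = 2 * (n : ℚ))

/-!
Let `R` be the base ring (`ℤ` for lattices). The ideal `I = B(c, M)` is all of `R`. Otherwise
`I ⊆ pR` for some prime `p`, so `c / p` is isotropic and pairs integrally with `M`; then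
`M + R(c / p)` is even, hence equal to `M` by maximality, and `c = p • (c / p)` contradicts
primitivity. So `B c b₀ = 1` for some `b₀ ∈ M`, and writing `B b₀ b₀ = 2n`, the vector
`b = b₀ - n c` completes `c` to a hyperbolic pair. A vector `v` of `M` then has the component
`B(v, b) c + B(v, c) b` in the hyperbolic plane.
-/

section Splitting

variable {R A V : Type*} [CommRing R] [CommRing A] [Algebra R A]
  [AddCommGroup V] [Module R V] [Module A V] [IsScalarTower R A V]
  {B : LinearMap.BilinForm A V} {M : Submodule R V} {b c : V}

/-- A hyperbolic pair: two isotropic vectors with `B c b = 1`, the standard generators of a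
hyperbolic plane. -/
structure IsHyperbolicPair (B : LinearMap.BilinForm A V) (c b : V) : Prop where
  left_isotropic : B c c = 0
  right_isotropic : B b b = 0
  apply_eq_one : B c b = 1

/-- The vectors of `M` orthogonal to both `c` and `b`: the complement of the hyperbolic plane
spanned by `c` and `b`. -/
def hyperbolicComplement (B : LinearMap.BilinForm A V) (M : Submodule R V) (c b : V) :
    Submodule R V :=
  M ⊓ (LinearMap.ker (LinearMap.flip B c)).restrictScalars R
    ⊓ (LinearMap.ker (LinearMap.flip B b)).restrictScalars R

theorem mem_hyperbolicComplement {v : V} :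
    v ∈ hyperbolicComplement B M c b ↔ (v ∈ M ∧ B v c = 0) ∧ B v b = 0 :=
  Iff.rfl

theorem apply_eq_zero_of_mem_hyperbolicComplement (hB : B.IsSymm) {u k : V}
    (hu : u ∈ Submodule.span R {c, b}) (hk : k ∈ hyperbolicComplement B M c b) : B u k = 0 := by
  obtain ⟨x, y, rfl⟩ := Submodule.mem_span_pair.1 hu
  obtain ⟨⟨-, hkc⟩, hkb⟩ := mem_hyperbolicComplement.1 hk
  simp [hB.eq _ k, hkc, hkb]

namespace IsHyperbolicPair

theorem apply_smul_add_smul_left (h : IsHyperbolicPair B c b) (hB : B.IsSymm) (x y : R) :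
    B (x • c + y • b) c = algebraMap R A y := by
  simp [h.left_isotropic, hB.eq b c, h.apply_eq_one, Algebra.algebraMap_eq_smul_one]

theorem apply_smul_add_smul_right (h : IsHyperbolicPair B c b) (x y : R) :
    B (x • c + y • b) b = algebraMap R A x := by
  simp [h.right_isotropic, h.apply_eq_one, Algebra.algebraMap_eq_smul_one]

theorem span_inf_hyperbolicComplement (h : IsHyperbolicPair B c b) (hB : B.IsSymm) :
    Submodule.span R {c, b} ⊓ hyperbolicComplement B M c b = ⊥ := by
  rw [Submodule.eq_bot_iff]
  rintro u ⟨hu, ⟨-, huc⟩, hub⟩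
  obtain ⟨x, y, rfl⟩ := Submodule.mem_span_pair.1 hu
  have hy : algebraMap R A y = 0 := (h.apply_smul_add_smul_left hB x y).symm.trans huc
  have hx : algebraMap R A x = 0 := (h.apply_smul_add_smul_right x y).symm.trans hub
  rw [← algebraMap_smul A x c, ← algebraMap_smul A y b, hx, hy, zero_smul, zero_smul, add_zero]

theorem span_sup_hyperbolicComplement (h : IsHyperbolicPair B c b) (hB : B.IsSymm)
    (hc : c ∈ M) (hb : b ∈ M) (hMc : ∀ v ∈ M, B v c ∈ (1 : Submodule R A))
    (hMb : ∀ v ∈ M, B v b ∈ (1 : Submodule R A)) :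
    Submodule.span R {c, b} ⊔ hyperbolicComplement B M c b = M := by
  have hspan : Submodule.span R {c, b} ≤ M := Submodule.span_le.2 (Set.pair_subset hc hb)
  refine le_antisymm (sup_le hspan (inf_le_left.trans inf_le_left)) fun v hv ↦ ?_
  obtain ⟨y, hy⟩ := Submodule.mem_one.1 (hMc v hv)
  obtain ⟨x, hx⟩ := Submodule.mem_one.1 (hMb v hv)
  have hu : x • c + y • b ∈ Submodule.span R {c, b} := Submodule.mem_span_pair.2 ⟨x, y, rfl⟩
  have hk : v - (x • c + y • b) ∈ hyperbolicComplement B M c b := by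
    refine mem_hyperbolicComplement.2 ⟨⟨M.sub_mem hv (hspan hu), ?_⟩, ?_⟩
    · rw [LinearMap.BilinForm.sub_left, h.apply_smul_add_smul_left hB, hy, sub_self]
    · rw [LinearMap.BilinForm.sub_left, h.apply_smul_add_smul_right, hx, sub_self]
  exact Submodule.mem_sup.2 ⟨_, hu, _, hk, add_sub_cancel _ _⟩

end IsHyperbolicPair

end Splitting

section EvenSubmodule

variable {R A V : Type*} [CommRing R] [CommRing A] [Algebra R A]
  [AddCommGroup V] [Module R V] [Module A V]
  {B : LinearMap.BilinForm A V} {M N : Submodule R V} {b c e : V}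

/-- An even submodule: `B` takes values in (the image of) `R` on `M`, and values in `2R` on its
diagonal. This is the arithmetic part of being an even lattice. -/
structure IsEvenSubmodule (B : LinearMap.BilinForm A V) (M : Submodule R V) : Prop where
  apply_mem_one : ∀ v ∈ M, ∀ w ∈ M, B v w ∈ (1 : Submodule R A)
  apply_self_mem : ∀ v ∈ M, B v v ∈ Submodule.span R {(2 : A)}

namespace IsEvenSubmodule

theorem mono (hN : IsEvenSubmodule B N) (hMN : M ≤ N) : IsEvenSubmodule B M where
  apply_mem_one v hv w hw := hN.apply_mem_one v (hMN hv) w (hMN hw)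
  apply_self_mem v hv := hN.apply_self_mem v (hMN hv)

variable [IsScalarTower R A V]

theorem sup_span_singleton (hM : IsEvenSubmodule B M) (hB : B.IsSymm)
    (heM : ∀ v ∈ M, B e v ∈ (1 : Submodule R A)) (hee : B e e ∈ Submodule.span R {(2 : A)}) :
    IsEvenSubmodule B (M ⊔ Submodule.span R {e}) where
  apply_mem_one v' hv' w' hw' := by
    obtain ⟨v, hv, x, hx, rfl⟩ := Submodule.mem_sup.1 hv'
    obtain ⟨w, hw, y, hy, rfl⟩ := Submodule.mem_sup.1 hw'
    obtain ⟨r, rfl⟩ := Submodule.mem_span_singleton.1 hx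
    obtain ⟨s, rfl⟩ := Submodule.mem_span_singleton.1 hy
    have hspan_le : Submodule.span R {(2 : A)} ≤ 1 := by
      rw [Submodule.span_singleton_le_iff_mem]
      exact Submodule.mem_one.2 ⟨2, map_ofNat _ 2⟩
    have hexpand : B (v + r • e) (w + s • e) =
        B v w + s • B e v + r • B e w + (r * s) • B e e := by
      simp only [map_add, LinearMap.add_apply, LinearMap.map_smul_of_tower,
        LinearMap.smul_apply, hB.eq v e, mul_smul]
      abel
    rw [hexpand]
    exact add_mem (add_mem (add_mem (hM.apply_mem_one v hv w hw)
      (Submodule.smul_mem _ s (heM v hv))) (Submodule.smul_mem _ r (heM w hw)))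
      (Submodule.smul_mem _ (r * s) (hspan_le hee))
  apply_self_mem v' hv' := by
    obtain ⟨v, hv, x, hx, rfl⟩ := Submodule.mem_sup.1 hv'
    obtain ⟨r, rfl⟩ := Submodule.mem_span_singleton.1 hx
    obtain ⟨k, hk⟩ := Submodule.mem_one.1 (heM v hv)
    have hexpand : B (v + r • e) (v + r • e) =
        B v v + (r * k) • (2 : A) + (r * r) • B e e := by
      simp only [map_add, LinearMap.add_apply, LinearMap.map_smul_of_tower,
        LinearMap.smul_apply, hB.eq v e, ← hk, Algebra.smul_def, map_mul]
      ring
    rw [hexpand]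
    exact add_mem (add_mem (hM.apply_self_mem v hv)
      (Submodule.smul_mem _ _ (Submodule.mem_span_singleton_self _)))
      (Submodule.smul_mem _ _ hee)

theorem mem_of_maximal (hM : Maximal (IsEvenSubmodule B) M) (hB : B.IsSymm)
    (heM : ∀ v ∈ M, B e v ∈ (1 : Submodule R A)) (hee : B e e ∈ Submodule.span R {(2 : A)}) :
    e ∈ M :=
  hM.le_of_ge (hM.prop.sup_span_singleton hB heM hee) le_sup_left
    (Submodule.mem_sup_right (Submodule.mem_span_singleton_self e))

theorem exists_isHyperbolicPair (hM : IsEvenSubmodule B M) (hB : B.IsSymm) (hc : c ∈ M)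
    (hcc : B c c = 0) (hb : b ∈ M) (hcb : B c b = 1) : ∃ b' ∈ M, IsHyperbolicPair B c b' := by
  obtain ⟨n, hn⟩ := Submodule.mem_span_singleton.1 (hM.apply_self_mem b hb)
  refine ⟨b - n • c, M.sub_mem hb (M.smul_mem n hc), hcc, ?_, ?_⟩
  · calc B (b - n • c) (b - n • c) = B b b - n • B c b - n • B b c + n • n • B c c := by
          simp only [map_sub, LinearMap.sub_apply, LinearMap.map_smul_of_tower,
            LinearMap.smul_apply]
          abel
      _ = n • (2 : A) - n • 1 - n • 1 := by rw [← hn, hB.eq b c, hcb, hcc]; simp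
      _ = 0 := by rw [← smul_sub, ← smul_sub]; norm_num
  · simp [hcb, hcc]

end IsEvenSubmodule

variable [IsScalarTower R A V]

/-- The ideal of all `r : R` whose image in `A` is a value `B c v` with `v ∈ M`; when `M` is even
and contains `c`, this is the ideal usually denoted `B(c, M)`. -/
def pairingIdeal (B : LinearMap.BilinForm A V) (M : Submodule R V) (c : V) : Ideal R :=
  (M.map ((B c).restrictScalars R)).comap (Algebra.linearMap R A)

theorem mem_pairingIdeal {r : R} :
    r ∈ pairingIdeal B M c ↔ ∃ v ∈ M, B c v = algebraMap R A r :=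
  Iff.rfl

end EvenSubmodule

section Primitive

/-- A vector is primitive with respect to `M` if only units of `R` divide it in `M`. -/
def IsPrimitiveVector {R V : Type*} [Semiring R] [AddCommMonoid V] [Module R V]
    (M : Submodule R V) (c : V) : Prop :=
  ∀ r : R, ∀ v ∈ M, c = r • v → IsUnit r

theorem isPrimitiveVector_int_of_one_lt {V : Type*} [AddCommGroup V] {M : Submodule ℤ V} {c : V}
    (h : ∀ d : ℤ, 1 < d → ∀ v ∈ M, c ≠ d • v) : IsPrimitiveVector M c := by
  rintro d v hv rfl
  have hd_zero : d ≠ 0 := by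
    rintro rfl
    exact h 2 one_lt_two 0 M.zero_mem (by simp)
  have hd_le : d ≤ 1 := not_lt.1 fun hd ↦ h d hd v hv rfl
  have hd_ge : -d ≤ 1 := not_lt.1 fun hd ↦ h (-d) hd (-v) (M.neg_mem hv) (by simp)
  exact Int.isUnit_iff.2 (by lia)

variable {R K V : Type*} [CommRing R] [Field K] [Algebra R K] [FaithfulSMul R K]
  [AddCommGroup V] [Module R V] [Module K V] [IsScalarTower R K V]
  {B : LinearMap.BilinForm K V} {M : Submodule R V} {c : V}

theorem IsPrimitiveVector.isUnit_of_pairingIdeal_le (hprim : IsPrimitiveVector M c)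
    (hM : Maximal (IsEvenSubmodule B) M) (hB : B.IsSymm) (hc : c ∈ M) (hcc : B c c = 0) {p : R}
    (hp : p ≠ 0) (hle : pairingIdeal B M c ≤ Ideal.span {p}) : IsUnit p := by
  have hpK : algebraMap R K p ≠ 0 := by simpa using hp
  have hdual : ∀ v ∈ M, B ((algebraMap R K p)⁻¹ • c) v ∈ (1 : Submodule R K) := by
    intro v hv
    obtain ⟨r, hr⟩ := Submodule.mem_one.1 (hM.prop.apply_mem_one c hc v hv)
    obtain ⟨k, rfl⟩ := Ideal.mem_span_singleton'.1 (hle (mem_pairingIdeal.2 ⟨v, hv, hr.symm⟩))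
    refine Submodule.mem_one.2 ⟨k, ?_⟩
    rw [LinearMap.BilinForm.smul_left, ← hr, map_mul]
    field_simp
  have hmem : (algebraMap R K p)⁻¹ • c ∈ M :=
    IsEvenSubmodule.mem_of_maximal hM hB hdual (by simp [hcc])
  exact hprim p _ hmem (by rw [← algebraMap_smul K p, smul_inv_smul₀ hpK])

theorem IsPrimitiveVector.pairingIdeal_eq_top [IsPrincipalIdealRing R] (hR : ¬ IsField R)
    (hprim : IsPrimitiveVector M c) (hM : Maximal (IsEvenSubmodule B) M) (hB : B.IsSymm)
    (hc : c ∈ M) (hcc : B c c = 0) : pairingIdeal B M c = ⊤ := by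
  by_contra hne
  obtain ⟨P, hPmax, hle⟩ := Ideal.exists_le_maximal _ hne
  have hPbot : P ≠ ⊥ :=
    have : Nontrivial R := (algebraMap R K).domain_nontrivial
    Ring.ne_bot_of_isMaximal_of_not_isField hPmax hR
  obtain ⟨p, rfl⟩ := IsPrincipalIdealRing.principal P
  have hp : p ≠ 0 := by simpa using hPbot
  exact hPmax.ne_top
    (Ideal.span_singleton_eq_top.2 (hprim.isUnit_of_pairingIdeal_le hM hB hc hcc hp hle))

end Primitive

section EvenLattice

variable {V : Type*} [AddCommGroup V] [Module ℚ V] {B : LinearMap.BilinForm ℚ V}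
  {M : Submodule ℤ V}

theorem isEvenLattice_iff : IsEvenLattice B M ↔
    M.FG ∧ Submodule.span ℚ (M : Set V) = ⊤ ∧ IsEvenSubmodule B M := by
  refine and_congr_right fun _ ↦ and_congr_right fun _ ↦
    ⟨fun ⟨hint, heven⟩ ↦ ⟨?_, ?_⟩, fun h ↦ ⟨?_, ?_⟩⟩
  · intro v hv w hw
    obtain ⟨n, hn⟩ := hint v hv w hw
    exact Submodule.mem_one.2 ⟨n, hn.symm⟩
  · intro v hv
    obtain ⟨n, hn⟩ := heven v hv
    exact Submodule.mem_span_singleton.2 ⟨n, by rw [hn, zsmul_eq_mul, mul_comm]⟩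
  · intro v hv w hw
    obtain ⟨n, hn⟩ := Submodule.mem_one.1 (h.apply_mem_one v hv w hw)
    exact ⟨n, hn.symm⟩
  · intro v hv
    obtain ⟨n, hn⟩ := Submodule.mem_span_singleton.1 (h.apply_self_mem v hv)
    exact ⟨n, by rw [← hn, zsmul_eq_mul, mul_comm]⟩

theorem IsEvenLattice.maximal_isEvenSubmodule (hM : IsEvenLattice B M)
    (hmax : ∀ M' : Submodule ℤ V, IsEvenLattice B M' → M ≤ M' → M' = M) :
    Maximal (IsEvenSubmodule B) M := by
  obtain ⟨hfg, hspan, heven⟩ := isEvenLattice_iff.1 hM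
  refine ⟨heven, fun N hN hMN e he ↦ ?_⟩
  -- `N` need not be finitely generated, so maximality is applied to `M + ℤe ⊆ N`.
  have hle : M ⊔ Submodule.span ℤ {e} ≤ N :=
    sup_le hMN ((Submodule.span_singleton_le_iff_mem _ _).2 he)
  have hlattice : IsEvenLattice B (M ⊔ Submodule.span ℤ {e}) :=
    isEvenLattice_iff.2 ⟨hfg.sup (Submodule.fg_span_singleton e),
      top_unique (hspan.ge.trans (Submodule.span_mono (SetLike.coe_subset_coe.2 le_sup_left))),
      hN.mono hle⟩
  rw [← hmax _ hlattice le_sup_left]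
  exact Submodule.mem_sup_right (Submodule.mem_span_singleton_self e)

end EvenLattice

theorem fake_monster.stmt2_general {R K V : Type*} [CommRing R] [IsPrincipalIdealRing R]
    [Field K] [Algebra R K] [FaithfulSMul R K] [AddCommGroup V] [Module R V] [Module K V]
    [IsScalarTower R K V] (hR : ¬ IsField R) (B : LinearMap.BilinForm K V) (hB : B.IsSymm)
    (M : Submodule R V) (hM : Maximal (IsEvenSubmodule B) M)
    (c : V) (hc : c ∈ M) (hprim : IsPrimitiveVector M c) (hiso : B c c = 0) :
    ∃ b ∈ M, B b b = 0 ∧ B c b = 1 ∧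
      Submodule.span R {c, b} ⊓ hyperbolicComplement B M c b = ⊥ ∧
      Submodule.span R {c, b} ⊔ hyperbolicComplement B M c b = M ∧
      ∀ u ∈ Submodule.span R {c, b}, ∀ k ∈ hyperbolicComplement B M c b, B u k = 0 := by
  have htop : pairingIdeal B M c = ⊤ := hprim.pairingIdeal_eq_top hR hM hB hc hiso
  obtain ⟨b₀, hb₀, hcb₀⟩ := mem_pairingIdeal.1 ((Ideal.eq_top_iff_one _).1 htop)
  obtain ⟨b, hb, hpair⟩ :=
    hM.prop.exists_isHyperbolicPair hB hc hiso hb₀ (hcb₀.trans (map_one _))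
  have hint : ∀ w ∈ M, ∀ v ∈ M, B v w ∈ (1 : Submodule R K) :=
    fun w hw v hv ↦ hM.prop.apply_mem_one v hv w hw
  exact ⟨b, hb, hpair.right_isotropic, hpair.apply_eq_one, hpair.span_inf_hyperbolicComplement hB,
    hpair.span_sup_hyperbolicComplement hB hc hb (hint c hc) (hint b hb),
    fun u hu k hk ↦ apply_eq_zero_of_mem_hyperbolicComplement hB hu hk⟩

/-- Let `M` be a maximal even lattice in a finite-dimensional `ℚ`-vector
space with nondegenerate symmetric bilinear form `B`, and let `c ∈ M` be primitive with
`B c c = 0`. Then there is `b ∈ M` with `B b b = 0` and `B c b = 1` such that `M` is the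
internal orthogonal direct sum of `U = ℤc + ℤb` and
`K = {v ∈ M : B v c = 0 ∧ B v b = 0}`. -/
theorem fake_monster.stmt2 {V : Type*} [AddCommGroup V] [Module ℚ V]
    [FiniteDimensional ℚ V]
    (B : V →ₗ[ℚ] V →ₗ[ℚ] ℚ)
    (hsymm : ∀ v w : V, B v w = B w v)
    (hnondeg : ∀ v : V, (∀ w : V, B v w = 0) → v = 0)
    (M : Submodule ℤ V)
    (hM : IsEvenLattice B M)
    (hmax : ∀ M' : Submodule ℤ V, IsEvenLattice B M' → M ≤ M' → M' = M)
    (c : V) (hc : c ∈ M)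
    (hprim : ∀ d : ℤ, 1 < d → ∀ v ∈ M, c ≠ d • v)
    (hiso : B c c = 0) :
    ∃ b ∈ M, B b b = 0 ∧ B c b = 1 ∧
      (Submodule.span ℤ ({c, b} : Set V)) ⊓
          (M ⊓ (LinearMap.ker (B.flip c)).restrictScalars ℤ
             ⊓ (LinearMap.ker (B.flip b)).restrictScalars ℤ) = ⊥ ∧
      (Submodule.span ℤ ({c, b} : Set V)) ⊔
          (M ⊓ (LinearMap.ker (B.flip c)).restrictScalars ℤ
             ⊓ (LinearMap.ker (B.flip b)).restrictScalars ℤ) = M ∧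
      ∀ u ∈ Submodule.span ℤ ({c, b} : Set V),
        ∀ k ∈ M ⊓ (LinearMap.ker (B.flip c)).restrictScalars ℤ
             ⊓ (LinearMap.ker (B.flip b)).restrictScalars ℤ, B u k = 0 := by
  exact fake_monster.stmt2_general Int.not_isField B ⟨hsymm⟩ M (hM.maximal_isEvenSubmodule hmax)
    c hc (isPrimitiveVector_int_of_one_lt hprim) hiso
end

section
/- Let ι be a finite type, A : Matrix ι ι ℚ, and let b : ℕ → ℤ be a finitely supported function with b(0) = 0 such that, in the field ℚ(X) of rational functions over ℚ, the image of det(1 - X·A) equals ∏_{k ≥ 1} (1 - X^k)^{b(k)}. Then for every positive integer m, m·b(m) = ∑_{k | m} μ(m/k)·trace(A^k), the sum ranging over the positive divisors k of m. -/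
/-!
Apply the logarithmic derivative for `X · d/dX` to the cycle shape identity, read among the units
of the ring of power series. Jacobi's formula for the derivative of a determinant sends
`det (1 - X·A)` to `-∑_{m ≥ 1} tr (A ^ m) X ^ m`, and the geometric series sends `1 - X ^ k` to
`-∑_{j ≥ 1} k X ^ (k j)`. Comparing coefficients gives `∑_{k ∣ m} k b(k) = tr (A ^ m)`, which
Möbius inversion solves for `b`.
-/

section Derivation

variable {R A : Type*} [CommRing R] [CommRing A] [Algebra R A]

lemma derivation_prod {M ι : Type*} [AddCommGroup M] [Module A M] [Module R M] [DecidableEq ι]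
    (D : Derivation R A M) (s : Finset ι) (f : ι → A) :
    D (∏ i ∈ s, f i) = ∑ i ∈ s, (∏ j ∈ s.erase i, f j) • D (f i) := by
  induction s using Finset.induction_on with
  | empty => simp
  | insert a s ha ih =>
    rw [Finset.prod_insert ha, Finset.sum_insert ha, D.leibniz, ih, Finset.erase_insert ha,
      Finset.smul_sum, add_comm]
    congr 1
    refine Finset.sum_congr rfl fun i hi => ?_
    rw [Finset.erase_insert_of_ne (ne_of_mem_of_not_mem hi ha).symm,
      Finset.prod_insert fun h => ha (Finset.mem_of_mem_erase h), mul_smul]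

variable {ι : Type*} [Fintype ι] [DecidableEq ι]

lemma derivation_det (D : Derivation R A A) (M : Matrix ι ι A) :
    D M.det = (M.adjugate * M.map D).trace := by
  have diag_eq_det (i : ι) :
      (M.adjugate * M.map D) i i = (M.updateCol i fun j => D (M j i)).det := by
    rw [← Matrix.cramer_apply, Matrix.cramer_eq_adjugate_mulVec]
    rfl
  simp only [Matrix.trace, Matrix.diag, diag_eq_det, Matrix.det_apply, map_sum]
  rw [Finset.sum_comm]
  refine Finset.sum_congr rfl fun σ _ => ?_
  rw [← Finset.smul_sum, Units.smul_def, Units.smul_def, map_zsmul, derivation_prod]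
  congr 1
  refine Finset.sum_congr rfl fun i _ => ?_
  rw [← Finset.prod_erase_mul Finset.univ _ (Finset.mem_univ i), Matrix.updateCol_self,
    smul_eq_mul]
  congr 1
  refine Finset.prod_congr rfl fun j hj => ?_
  rw [Matrix.updateCol_ne (Finset.ne_of_mem_erase hj)]

lemma derivation_det_of_mul_eq_one (D : Derivation R A A) {M N : Matrix ι ι A} (h : M * N = 1) :
    D M.det = M.det * (N * M.map D).trace := by
  have adjugate_eq : M.adjugate = M.det • N := by
    rw [← mul_one M.adjugate, ← h, ← mul_assoc, Matrix.adjugate_mul, Matrix.smul_mul, one_mul]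
  rw [derivation_det, adjugate_eq, Matrix.smul_mul, Matrix.trace_smul, smul_eq_mul]

end Derivation

section LogarithmicDerivative

variable {R A M : Type*} [CommRing R] [CommRing A] [Algebra R A] [AddCommGroup M] [Module A M]
  [Module R M] (D : Derivation R A M)

/-- The logarithmic derivative `u ↦ u⁻¹ D(u)` on units, as a homomorphism from the multiplicative
group of units to the additive group in which `D` takes its values. -/
def dlog : Additive Aˣ →+ M where
  toFun u := (↑u.toMul⁻¹ : A) • D ↑u.toMul
  map_zero' := by simp
  map_add' u v := by
    simp only [toMul_add, Units.val_mul, D.leibniz, mul_inv, smul_add, smul_smul]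
    rw [add_comm]
    congr 2
    · rw [mul_assoc, Units.inv_mul, mul_one]
    · rw [mul_right_comm, Units.inv_mul, one_mul]

lemma dlog_apply (u : Aˣ) : dlog D (.ofMul u) = (↑u⁻¹ : A) • D ↑u := rfl

lemma dlog_eq_of_eq_smul {u : Aˣ} {g : M} (h : D ↑u = (u : A) • g) : dlog D (.ofMul u) = g := by
  rw [dlog_apply, h, smul_smul, Units.inv_mul, one_smul]

lemma dlog_prod_zpow {ι : Type*} (s : Finset ι) (u : ι → Aˣ) (b : ι → ℤ) :
    dlog D (.ofMul (∏ i ∈ s, u i ^ b i)) = ∑ i ∈ s, b i • dlog D (.ofMul (u i)) := by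
  simp only [ofMul_prod, ofMul_zpow, map_sum, map_zsmul]

end LogarithmicDerivative

section PowerSeries

open PowerSeries

variable {R : Type*} [CommRing R]

variable (R) in
/-- The Euler derivation `X · d/dX` of the ring of power series. -/
noncomputable def eulerDerivation : Derivation R R⟦X⟧ R⟦X⟧ :=
  (X : R⟦X⟧) • derivative R

lemma eulerDerivation_C (a : R) : eulerDerivation R (C a) = 0 := by
  simp [eulerDerivation]

lemma eulerDerivation_X_pow (k : ℕ) : eulerDerivation R (X ^ k) = k • X ^ k := by
  cases k with
  | zero => simp
  | succ k =>
    rw [eulerDerivation, Derivation.smul_apply, Derivation.leibniz_pow, derivative_X,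
      Nat.add_sub_cancel, smul_eq_mul, smul_eq_mul, mul_one, mul_smul_comm, ← pow_succ']

lemma one_sub_X_pow_mul_expand_mk_one {k : ℕ} (hk : k ≠ 0) :
    (1 - X ^ k) * expand k hk (mk 1 : R⟦X⟧) = 1 := by
  have := congrArg (expand k hk) (mk_one_mul_one_sub_eq_one R)
  rwa [map_mul, map_sub, map_one, expand_X, mul_comm] at this

lemma isUnit_one_sub_X_pow {k : ℕ} (hk : k ≠ 0) : IsUnit (1 - X ^ k : R⟦X⟧) :=
  .of_mul_eq_one _ (one_sub_X_pow_mul_expand_mk_one hk)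

lemma coeff_dlog_one_sub_X_pow {k m : ℕ} (hk : k ≠ 0) (hm : m ≠ 0) {u : R⟦X⟧ˣ}
    (hu : (u : R⟦X⟧) = 1 - X ^ k) :
    coeff m (dlog (eulerDerivation R) (.ofMul u)) = if k ∣ m then -(k : R) else 0 := by
  have dlog_eq : dlog (eulerDerivation R) (.ofMul u) = k • (1 - expand k hk (mk 1)) := by
    apply dlog_eq_of_eq_smul
    rw [hu, map_sub, Derivation.map_one_eq_zero, eulerDerivation_X_pow, smul_eq_mul,
      mul_smul_comm, mul_sub, one_sub_X_pow_mul_expand_mk_one, mul_one, sub_sub_cancel_left,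
      smul_neg, zero_sub]
  rw [dlog_eq, map_nsmul, map_sub, coeff_expand, coeff_one, if_neg hm]
  split_ifs <;> simp

variable {ι : Type*} [Fintype ι] [DecidableEq ι]

/-- The matrix of power series `∑ A ^ m X ^ m`, the inverse of `1 - X·A`. -/
def resolventSeries (A : Matrix ι ι R) : Matrix ι ι R⟦X⟧ :=
  .of fun i j => mk fun m => (A ^ m) i j

lemma coeff_trace_resolventSeries (A : Matrix ι ι R) (m : ℕ) :
    coeff m (resolventSeries A).trace = (A ^ m).trace := by
  simp [resolventSeries, Matrix.trace]

lemma one_sub_X_smul_mul_resolventSeries (A : Matrix ι ι R) :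
    (1 - (X : R⟦X⟧) • A.map C) * resolventSeries A = 1 := by
  rw [sub_mul, one_mul, Matrix.smul_mul, sub_eq_iff_eq_add]
  ext i j m
  cases m with
  | zero => by_cases hij : i = j <;> simp [resolventSeries, hij]
  | succ m =>
    simp [resolventSeries, Matrix.one_apply, apply_ite, coeff_one, coeff_succ_X_mul,
      Matrix.mul_apply, pow_succ']

lemma coe_charpolyRev (A : Matrix ι ι R) :
    (A.charpolyRev : R⟦X⟧) = (1 - (X : R⟦X⟧) • A.map C).det := by
  rw [Matrix.charpolyRev, ← Polynomial.coeToPowerSeries.ringHom_apply, RingHom.map_det]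
  congr 1
  ext i j : 2
  by_cases hij : i = j <;> simp [hij, X_mul]

lemma isUnit_coe_charpolyRev (A : Matrix ι ι R) : IsUnit (A.charpolyRev : R⟦X⟧) := by
  rw [coe_charpolyRev]
  exact Matrix.isUnit_det_of_right_inverse (one_sub_X_smul_mul_resolventSeries A)

lemma coeff_dlog_charpolyRev (A : Matrix ι ι R) {m : ℕ} (hm : m ≠ 0) {u : R⟦X⟧ˣ}
    (hu : (u : R⟦X⟧) = A.charpolyRev) :
    coeff m (dlog (eulerDerivation R) (.ofMul u)) = -(A ^ m).trace := by
  have inverse := one_sub_X_smul_mul_resolventSeries A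
  have map_euler : (1 - (X : R⟦X⟧) • A.map C).map (eulerDerivation R) =
      (1 - (X : R⟦X⟧) • A.map C) - 1 := by
    ext i j : 2
    have euler_X : eulerDerivation R X = X := by simpa using eulerDerivation_X_pow (R := R) 1
    by_cases hij : i = j <;> simp [hij, eulerDerivation_C, euler_X, mul_comm]
  have dlog_eq : dlog (eulerDerivation R) (.ofMul u) = (1 - resolventSeries A).trace := by
    apply dlog_eq_of_eq_smul
    rw [hu, coe_charpolyRev, derivation_det_of_mul_eq_one _ inverse, map_euler, mul_sub,
      mul_eq_one_comm.mp inverse, mul_one, smul_eq_mul]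
  rw [dlog_eq, Matrix.trace_sub, map_sub, coeff_trace_resolventSeries, Matrix.trace_one,
    ← map_natCast C, coeff_C, if_neg hm, zero_sub]

end PowerSeries

lemma units_eq_prod_zpow_of_isFractionRing {P K S ι : Type*} [CommRing P] [Field K]
    [Algebra P K] [IsFractionRing P K] [CommRing S] [IsDomain S] {f : P →+* S}
    (hf : Function.Injective f) {p : P} {q : ι → P} {s : Finset ι} {b : ι → ℤ}
    (h : algebraMap P K p = ∏ i ∈ s, algebraMap P K (q i) ^ b i)
    {u : Sˣ} (hu : (u : S) = f p) {v : ι → Sˣ} (hv : ∀ i ∈ s, (v i : S) = f (q i)) :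
    u = ∏ i ∈ s, v i ^ b i := by
  have inj := IsFractionRing.injective S (FractionRing S)
  let φ : K →+* FractionRing S :=
    IsFractionRing.lift (g := (algebraMap S (FractionRing S)).comp f) (inj.comp hf)
  have φ_algebraMap (x : P) : φ (algebraMap P K x) = algebraMap S (FractionRing S) (f x) :=
    IsFractionRing.lift_algebraMap _ x
  apply Units.map_injective (f := (algebraMap S (FractionRing S) : S →* FractionRing S)) inj
  ext
  simp only [map_prod, map_zpow, Units.coe_prod, Units.val_zpow_eq_zpow_val, Units.coe_map,
    MonoidHom.coe_coe, hu, ← φ_algebraMap, h]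
  refine Finset.prod_congr rfl fun i hi => ?_
  rw [map_zpow₀, hv i hi, φ_algebraMap]

lemma sum_divisors_eq_sum_ite_dvd {M : Type*} [AddCommMonoid M] {f : ℕ → M} {s : Finset ℕ}
    (hf : ∀ k ∉ s, f k = 0) {m : ℕ} (hm : m ≠ 0) :
    ∑ k ∈ m.divisors, f k = ∑ k ∈ s, if k ∣ m then f k else 0 := by
  rw [← Finset.sum_filter]
  symm
  refine Finset.sum_subset (fun k hk => ?_) fun k hk hk' => hf k fun hks => hk' ?_
  · exact Nat.mem_divisors.2 ⟨(Finset.mem_filter.1 hk).2, hm⟩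
  · exact Finset.mem_filter.2 ⟨hks, Nat.dvd_of_mem_divisors hk⟩

lemma sum_divisors_mul_cycleShape_eq_trace_pow {R : Type*} [CommRing R] [IsDomain R]
    {ι : Type*} [Fintype ι] [DecidableEq ι] (A : Matrix ι ι R) (b : ℕ →₀ ℤ) (hb0 : b 0 = 0)
    (hshape : algebraMap (Polynomial R) (RatFunc R) A.charpolyRev =
      ∏ k ∈ b.support, ((1 : RatFunc R) - RatFunc.X ^ k) ^ (b k)) {m : ℕ} (hm : m ≠ 0) :
    ∑ k ∈ m.divisors, (k : R) * b k = (A ^ m).trace := by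
  have ne_zero : ∀ k ∈ b.support, k ≠ 0 := by
    rintro k hk rfl
    exact Finsupp.mem_support_iff.1 hk hb0
  obtain ⟨u, hu⟩ := isUnit_coe_charpolyRev A
  choose! v hv using fun k hk => isUnit_one_sub_X_pow (R := R) (ne_zero k hk)
  have hshape_units : u = ∏ k ∈ b.support, v k ^ b k := by
    refine units_eq_prod_zpow_of_isFractionRing (K := RatFunc R)
      (f := Polynomial.coeToPowerSeries.ringHom) (Polynomial.coe_injective R)
      (p := A.charpolyRev) (q := fun k => 1 - .X ^ k) ?_ hu fun k hk => ?_
    · simpa only [map_sub, map_one, map_pow, RatFunc.algebraMap_X] using hshape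
    · simp [hv k hk]
  have coeff_eq : -(A ^ m).trace = ∑ k ∈ b.support, b k • if k ∣ m then -(k : R) else 0 := by
    rw [← coeff_dlog_charpolyRev A hm hu, hshape_units, dlog_prod_zpow, map_sum]
    refine Finset.sum_congr rfl fun k hk => ?_
    rw [map_zsmul, coeff_dlog_one_sub_X_pow (ne_zero k hk) hm (hv k hk)]
  have vanish : ∀ k ∉ b.support, (k : R) * b k = 0 := fun k hk => by
    rw [Finsupp.notMem_support_iff.1 hk, Int.cast_zero, mul_zero]
  rw [sum_divisors_eq_sum_ite_dvd vanish hm, ← neg_inj, coeff_eq, ← Finset.sum_neg_distrib]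
  refine Finset.sum_congr rfl fun k _ => ?_
  split_ifs <;> simp [mul_comm]

open ArithmeticFunction in
theorem fake_monster.stmt11_general {R : Type*} [CommRing R] [IsDomain R]
    {ι : Type*} [Fintype ι] [DecidableEq ι]
    (A : Matrix ι ι R) (b : ℕ →₀ ℤ) (hb0 : b 0 = 0)
    (hshape : algebraMap (Polynomial R) (RatFunc R) A.charpolyRev =
      ∏ k ∈ b.support, ((1 : RatFunc R) - RatFunc.X ^ k) ^ (b k)) :
    ∀ m : ℕ, 0 < m →
      (m : R) * ((b m : ℤ) : R) =
        ∑ k ∈ m.divisors, ((moebius (m / k) : ℤ) : R) * Matrix.trace (A ^ k) := by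
  intro m hm
  have moebius_inversion := sum_eq_iff_sum_mul_moebius_eq.1
    (fun n hn => sum_divisors_mul_cycleShape_eq_trace_pow A b hb0 hshape (Nat.ne_of_gt hn)) m hm
  rw [← moebius_inversion,
    Nat.sum_divisorsAntidiagonal' fun d k => ((moebius d : ℤ) : R) * (A ^ k).trace]

open ArithmeticFunction in
/-- Let `A` be a square matrix over `ℚ` with cycle shape `b`, i.e. the
image in `ℚ(X)` of `det(1 - X·A)` equals `∏_{k ≥ 1} (1 - X^k)^{b k}` for a finitely
supported `b : ℕ → ℤ` with `b 0 = 0`.  Then for every positive integer `m`,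
`m·b(m) = ∑_{k ∣ m} μ(m/k)·trace(A^k)`. -/
theorem fake_monster.stmt11 {ι : Type*} [Fintype ι] [DecidableEq ι]
    (A : Matrix ι ι ℚ) (b : ℕ →₀ ℤ) (hb0 : b 0 = 0)
    (hshape : algebraMap (Polynomial ℚ) (RatFunc ℚ) A.charpolyRev =
      ∏ k ∈ b.support, ((1 : RatFunc ℚ) - RatFunc.X ^ k) ^ (b k)) :
    ∀ m : ℕ, 0 < m →
      (m : ℚ) * ((b m : ℤ) : ℚ) =
        ∑ k ∈ m.divisors, ((moebius (m / k) : ℤ) : ℚ) * Matrix.trace (A ^ k) :=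
  fake_monster.stmt11_general A b hb0 hshape
end
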